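/- Let S be a finite set, let R ⊆ S × S be a symmetric relation with R nonempty, and write R_A = {B ∈ S : (A,B) ∈ R}; assume R_A is nonempty for every A ∈ S. Let P be a finite set, let Λ: S → (subsets of P) with Λ(A) nonempty for every A, and for each A ∈ S let β^A: P → ℝ≥0 satisfy Σ_{p ∈ Λ(A)} (β^A_p)² ≤ 1. Then (1/|R|)·Σ_{(A,B)∈R} Σ_{p ∈ Λ(A) ∩ Λ(B)} β^A_p·β^B_p ≤ max_{A ∈ S, p ∈ Λ(A)} ( |{B ∈ R_A : p ∈ Λ(B)}| / |R_A| ). -/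

import Mathlib

open scoped BigOperators

/-! By AM-GM, `2 β^A_p β^B_p ≤ (β^A_p)² + (β^B_p)²`, and since `R` is symmetric both squares
have the same total over `R`; so each product may be replaced by `(β^A_p)²`. For fixed `A`,
exchanging the sums over `B` and `p` counts `(β^A_p)²` once for each `B ∈ R_A` with `p ∈ Λ(B)`, that
is, at most `M |R_A|` times, where `M` is the maximal fraction. Now `Σ_{p ∈ Λ(A)} (β^A_p)² ≤ 1` and
`Σ_A |R_A| = |R|`. -/

section

variable {S P 𝕜 : Type*} [DecidableEq P]

theorem sum_sum_inter_eq_sum_card_nsmul {M : Type*} [AddCommMonoid M] (s : Finset S) (a : Finset P)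
    (t : S → Finset P) (w : P → M) :
    ∑ B ∈ s, ∑ p ∈ a ∩ t B, w p = ∑ p ∈ a, (s.filter fun B => p ∈ t B).card • w p := by
  simp_rw [← Finset.filter_mem_eq_inter, Finset.sum_filter]
  rw [Finset.sum_comm]
  simp only [← Finset.sum_filter, Finset.sum_const]

theorem sum_sum_inter_le_mul_sum [Semiring 𝕜] [PartialOrder 𝕜] [IsOrderedRing 𝕜]
    (s : Finset S) (a : Finset P) (t : S → Finset P) {w : P → 𝕜} {c : 𝕜}
    (hw : ∀ p ∈ a, 0 ≤ w p) (hc : ∀ p ∈ a, ((s.filter fun B => p ∈ t B).card : 𝕜) ≤ c) :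
    ∑ B ∈ s, ∑ p ∈ a ∩ t B, w p ≤ c * ∑ p ∈ a, w p := by
  rw [sum_sum_inter_eq_sum_card_nsmul, Finset.mul_sum]
  refine Finset.sum_le_sum fun p hp => ?_
  rw [nsmul_eq_mul]
  exact mul_le_mul_of_nonneg_right (hc p hp) (hw p hp)

variable [CommRing 𝕜] [LinearOrder 𝕜] [IsStrictOrderedRing 𝕜] {R : Finset (S × S)}

theorem sum_overlap_le_sum_sq (hsym : ∀ q ∈ R, (q.2, q.1) ∈ R) (Λ : S → Finset P) (β : S → P → 𝕜) :
    ∑ q ∈ R, ∑ p ∈ Λ q.1 ∩ Λ q.2, β q.1 p * β q.2 p ≤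
      ∑ q ∈ R, ∑ p ∈ Λ q.1 ∩ Λ q.2, β q.1 p ^ 2 := by
  have hswap : ∑ q ∈ R, ∑ p ∈ Λ q.1 ∩ Λ q.2, β q.2 p ^ 2 =
      ∑ q ∈ R, ∑ p ∈ Λ q.1 ∩ Λ q.2, β q.1 p ^ 2 :=
    Finset.sum_nbij' Prod.swap Prod.swap hsym hsym (fun _ _ => rfl) (fun _ _ => rfl)
      fun q _ => by rw [Finset.inter_comm]; rfl
  have hamgm : ∑ q ∈ R, ∑ p ∈ Λ q.1 ∩ Λ q.2, 2 * (β q.1 p * β q.2 p) ≤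
      ∑ q ∈ R, ∑ p ∈ Λ q.1 ∩ Λ q.2, (β q.1 p ^ 2 + β q.2 p ^ 2) := by
    gcongr with q _ p _
    rw [← mul_assoc]
    exact two_mul_le_add_sq (β q.1 p) (β q.2 p)
  simp only [Finset.sum_add_distrib, ← Finset.mul_sum] at hamgm
  linarith

theorem sum_overlap_le_mul_card [Fintype S] [DecidableEq S]
    (hsym : ∀ q ∈ R, (q.2, q.1) ∈ R) (Λ : S → Finset P) {β : S → P → 𝕜}
    (hβ : ∀ A, ∑ p ∈ Λ A, β A p ^ 2 ≤ 1) {c : 𝕜} (hc : 0 ≤ c)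
    (hfrac : ∀ A, ∀ p ∈ Λ A,
      (((Finset.univ.filter fun B => (A, B) ∈ R).filter fun B => p ∈ Λ B).card : 𝕜) ≤
        c * (Finset.univ.filter fun B => (A, B) ∈ R).card) :
    ∑ q ∈ R, ∑ p ∈ Λ q.1 ∩ Λ q.2, β q.1 p * β q.2 p ≤ c * R.card := by
  have hfiber (f : S × S → 𝕜) :
      ∑ q ∈ R, f q = ∑ A, ∑ B ∈ Finset.univ.filter fun B => (A, B) ∈ R, f (A, B) :=
    Finset.sum_finset_product R _ _ (by simp)
  have hcard : (R.card : 𝕜) = ∑ A, ((Finset.univ.filter fun B => (A, B) ∈ R).card : 𝕜) := by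
    simpa using hfiber fun _ => 1
  calc ∑ q ∈ R, ∑ p ∈ Λ q.1 ∩ Λ q.2, β q.1 p * β q.2 p
      ≤ ∑ q ∈ R, ∑ p ∈ Λ q.1 ∩ Λ q.2, β q.1 p ^ 2 := sum_overlap_le_sum_sq hsym Λ β
    _ = ∑ A, ∑ B ∈ Finset.univ.filter fun B => (A, B) ∈ R, ∑ p ∈ Λ A ∩ Λ B, β A p ^ 2 :=
        hfiber _
    _ ≤ ∑ A, c * (Finset.univ.filter fun B => (A, B) ∈ R).card * ∑ p ∈ Λ A, β A p ^ 2 :=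
        Finset.sum_le_sum fun A _ =>
          sum_sum_inter_le_mul_sum _ _ _ (fun _ _ => sq_nonneg _) (hfrac A)
    _ ≤ ∑ A, c * (Finset.univ.filter fun B => (A, B) ∈ R).card :=
        Finset.sum_le_sum fun A _ => mul_le_of_le_one_right (by positivity) (hβ A)
    _ = c * R.card := by rw [hcard, Finset.mul_sum]

end

theorem average_overlap_le_max_fraction_general {S P : Type*} [Fintype S] [DecidableEq S]
    [DecidableEq P] (R : Finset (S × S)) (hsym : ∀ q ∈ R, (q.2, q.1) ∈ R)
    (hRA : ∀ A : S, (Finset.univ.filter fun B => (A, B) ∈ R).Nonempty)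
    (Λ : S → Finset P) (hΛ : ∃ A, (Λ A).Nonempty)
    (β : S → P → ℝ) (hβ : ∀ A, ∑ p ∈ Λ A, β A p ^ 2 ≤ 1) :
    (∑ q ∈ R, ∑ p ∈ Λ q.1 ∩ Λ q.2, β q.1 p * β q.2 p) / (R.card : ℝ) ≤
      sSup {x : ℝ | ∃ A : S, ∃ p ∈ Λ A,
        x = (((Finset.univ.filter fun B => (A, B) ∈ R).filter fun B => p ∈ Λ B).card : ℝ) /
          (((Finset.univ.filter fun B => (A, B) ∈ R).card : ℝ))} := by
  set M : ℝ := sSup _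
  have hle_M (A : S) (p : P) (hp : p ∈ Λ A) :
      (((Finset.univ.filter fun B => (A, B) ∈ R).filter fun B => p ∈ Λ B).card : ℝ) /
        (Finset.univ.filter fun B => (A, B) ∈ R).card ≤ M := by
    refine le_csSup ⟨1, ?_⟩ ⟨A, p, hp, rfl⟩
    rintro x ⟨A, p, -, rfl⟩
    exact div_le_one_of_le₀ (mod_cast Finset.card_filter_le _ _) (Nat.cast_nonneg _)
  have hM : 0 ≤ M := by
    obtain ⟨A, p, hp⟩ := hΛ
    exact le_trans (by positivity) (hle_M A p hp)
  exact div_le_of_le_mul₀ (Nat.cast_nonneg _) hM <|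
    sum_overlap_le_mul_card hsym Λ hβ hM fun A p hp =>
      (div_le_iff₀ (mod_cast (hRA A).card_pos)).1 (hle_M A p hp)

/-- Let `S` be a finite set, `R ⊆ S × S` a nonempty symmetric relation
with each `R_A = {B : (A,B) ∈ R}` nonempty, `Λ : S → Finset P` with each `Λ A` nonempty,
and `β^A : P → ℝ≥0` with `Σ_{p ∈ Λ A} (β^A_p)² ≤ 1` for each `A`. Then the average over
`(A,B) ∈ R` of `Σ_{p ∈ Λ A ∩ Λ B} β^A_p·β^B_p` is at most
`max_{A ∈ S, p ∈ Λ A} |{B ∈ R_A : p ∈ Λ B}| / |R_A|`. -/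
theorem average_overlap_le_max_fraction {S P : Type*} [Fintype S] [DecidableEq S]
    [Fintype P] [DecidableEq P]
    (R : Finset (S × S)) (hsym : ∀ p ∈ R, (p.2, p.1) ∈ R) (hR : R.Nonempty)
    (hRA : ∀ A : S, (Finset.univ.filter fun B => (A, B) ∈ R).Nonempty)
    (Λ : S → Finset P) (hΛ : ∀ A, (Λ A).Nonempty)
    (β : S → P → ℝ) (hβ0 : ∀ A p, 0 ≤ β A p)
    (hβ1 : ∀ A, ∑ p ∈ Λ A, β A p ^ 2 ≤ 1) :
    (∑ q ∈ R, ∑ p ∈ Λ q.1 ∩ Λ q.2, β q.1 p * β q.2 p) / (R.card : ℝ) ≤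
      sSup {x : ℝ | ∃ A : S, ∃ p ∈ Λ A,
        x = (((Finset.univ.filter fun B => (A, B) ∈ R).filter fun B => p ∈ Λ B).card : ℝ) /
          (((Finset.univ.filter fun B => (A, B) ∈ R).card : ℝ))} := by
  exact average_overlap_le_max_fraction_general R hsym hRA Λ ⟨hR.choose.1, hΛ _⟩ β hβ1
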